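/- arXiv:2405.14457 — 2 statements merged into one kernel-verified Lean document; each statement's English description precedes it below -/
import Mathlib

section
/- Let s > 0 and m < m' ∈ ℝ, and set μ = (m' − m)/s. Let P = N(m, s²) and Q = N(m', s²). For any α ∈ (0,1), define the threshold h = m + s·Φ⁻¹(1−α) and the deterministic test φ(x) = 1 if x > h and φ(x) = 0 otherwise. Then ∫ φ dP = α and 1 − ∫ φ dQ = Φ(Φ⁻¹(1−α) − μ); that is, the one-sided threshold test attains the Gaussian trade-off function G_μ exactly. -/
open MeasureTheory ProbabilityTheory Real

/-- The standard normal CDF `Φ`. -/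
noncomputable def Phi : ℝ → ℝ := fun x => cdf (gaussianReal 0 1) x

/-- The inverse `Φ⁻¹` of the standard normal CDF (as a function on `(0,1)`). -/
noncomputable def PhiInv : ℝ → ℝ := Function.invFun Phi

lemma Phi_continuous : Continuous Phi := by
  rw [continuous_iff_continuousAt]
  intro a
  have hmono : Monotone Phi := monotone_cdf (gaussianReal 0 1)
  rw [hmono.continuousAt_iff_leftLim_eq_rightLim]
  have h1 : Function.rightLim Phi a = Phi a := (cdf (gaussianReal 0 1)).rightLim_eq a
  rw [h1]
  apply le_antisymm (hmono.leftLim_le le_rfl)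
  have h2 := (cdf (gaussianReal 0 1)).measure_singleton a
  rw [measure_cdf] at h2
  have := nullSingletonClass_gaussianReal (μ := 0) (v := 1) one_ne_zero
  rw [measure_singleton] at h2
  have h3 := ENNReal.ofReal_eq_zero.1 h2.symm
  exact sub_nonpos.1 h3

lemma Phi_PhiInv {p : ℝ} (h0 : 0 < p) (h1 : p < 1) : Phi (PhiInv p) = p := by
  apply Function.invFun_eq
  have hb := ((tendsto_cdf_atBot (gaussianReal 0 1)).eventually (gt_mem_nhds h0)).exists
  have ht := ((tendsto_cdf_atTop (gaussianReal 0 1)).eventually (lt_mem_nhds h1)).exists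
  obtain ⟨a, ha⟩ := hb
  obtain ⟨b, hb⟩ := ht
  exact mem_range_of_exists_le_of_exists_ge Phi_continuous ⟨a, ha.le⟩ ⟨b, hb.le⟩

lemma gauss_Iic (s m h : ℝ) (hs : 0 < s) :
    (gaussianReal m (s ^ 2).toNNReal).real (Set.Iic h) = Phi ((h - m) / s) := by
  have e : gaussianReal m (s ^ 2).toNNReal
      = (gaussianReal 0 1).map (fun x => m + s * x) := by
    have : (fun x : ℝ => m + s * x) = (fun x => m + x) ∘ (fun x => s * x) := rfl
    rw [this, ← Measure.map_map (by fun_prop) (by fun_prop), gaussianReal_map_const_mul,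
      gaussianReal_map_const_add]
    congr 1
    · simp
    · ext
      simp [sq_nonneg]
  rw [e, map_measureReal_apply (by fun_prop) measurableSet_Iic, Phi, cdf_eq_real]
  congr 1
  ext x
  simp only [Set.mem_preimage, Set.mem_Iic, le_div_iff₀ hs]
  constructor <;> intro <;> linarith

lemma gauss_test (s m h : ℝ) (hs : 0 < s) :
    ∫ x, (if x > h then (1 : ℝ) else 0) ∂(gaussianReal m (s ^ 2).toNNReal)
      = 1 - Phi ((h - m) / s) := by
  rw [← gauss_Iic s m h hs, ← probReal_compl_eq_one_sub measurableSet_Iic, Set.compl_Iic,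
    ← integral_indicator_one measurableSet_Ioi]
  rfl

/-- The one-sided threshold test at `h = m + s·Φ⁻¹(1−α)` attains the Gaussian
trade-off function `G_μ` exactly, for `P = N(m, s²)`, `Q = N(m', s²)`, `μ = (m'−m)/s`. -/
theorem stmt_1 (s m m' : ℝ) (hs : 0 < s) (hmm' : m < m') (μ : ℝ) (hμ : μ = (m' - m) / s)
    (P Q : Measure ℝ) (hP : P = gaussianReal m (s ^ 2).toNNReal)
    (hQ : Q = gaussianReal m' (s ^ 2).toNNReal)
    (α : ℝ) (hα01 : α ∈ Set.Ioo (0 : ℝ) 1)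
    (h : ℝ) (hh : h = m + s * PhiInv (1 - α))
    (φ : ℝ → ℝ) (hφ : φ = fun x => if x > h then (1 : ℝ) else 0) :
    (∫ x, φ x ∂P) = α ∧ 1 - ∫ x, φ x ∂Q = Phi (PhiInv (1 - α) - μ) := by
  subst hP hQ hφ hh hμ
  have hp : Phi (PhiInv (1 - α)) = 1 - α :=
    Phi_PhiInv (by linarith [hα01.2]) (by linarith [hα01.1])
  rw [gauss_test s m _ hs, gauss_test s m' _ hs]
  have e1 : (m + s * PhiInv (1 - α) - m) / s = PhiInv (1 - α) := by field_simp; ring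
  have e2 : (m + s * PhiInv (1 - α) - m') / s = PhiInv (1 - α) - (m' - m) / s := by
    field_simp; ring
  rw [e1, e2, hp]
  constructor <;> ring
end

section
/- For fixed μ > 0, the function ε ↦ δ_μ(ε) = Φ(−ε/μ + μ/2) − e^ε·Φ(−ε/μ − μ/2) is differentiable on ℝ with derivative δ_μ'(ε) = −e^ε·Φ(−ε/μ − μ/2); in particular δ_μ is strictly decreasing on ℝ. -/
open MeasureTheory ProbabilityTheory Real

/-- `δ_μ(ε) = Φ(−ε/μ + μ/2) − e^ε·Φ(−ε/μ − μ/2)`. -/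
noncomputable def deltaGDP (μ ε : ℝ) : ℝ :=
  Phi (-ε / μ + μ / 2) - Real.exp ε * Phi (-ε / μ - μ / 2)

lemma Phi_eq_aux (x : ℝ) : Phi x = ∫ t in Set.Iic x, gaussianPDFReal 0 1 t := by
  unfold Phi
  rw [cdf_eq_real, measureReal_def, gaussianReal_apply_eq_integral 0 one_ne_zero,
    ENNReal.toReal_ofReal]
  exact integral_nonneg fun t => gaussianPDFReal_nonneg 0 1 t

lemma pdf_cont_aux : Continuous (gaussianPDFReal 0 1) := by
  unfold gaussianPDFReal
  fun_prop

lemma Phi_hasDerivAt_aux (x : ℝ) : HasDerivAt Phi (gaussianPDFReal 0 1 x) x := by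
  have hi := integrable_gaussianPDFReal 0 1
  have h : Phi = fun y => Phi 0 + ∫ t in (0:ℝ)..y, gaussianPDFReal 0 1 t := by
    funext y
    rw [← intervalIntegral.integral_Iic_sub_Iic hi.integrableOn hi.integrableOn,
      Phi_eq_aux, Phi_eq_aux]
    ring
  rw [h]
  exact (intervalIntegral.integral_hasDerivAt_right hi.intervalIntegrable
    (pdf_cont_aux.stronglyMeasurableAtFilter _ _) pdf_cont_aux.continuousAt).const_add _

lemma Phi_pos_aux (x : ℝ) : 0 < Phi x := by
  have hm : StrictMono Phi := strictMono_of_deriv_pos fun y => by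
    rw [(Phi_hasDerivAt_aux y).deriv]
    exact gaussianPDFReal_pos 0 1 y one_ne_zero
  have h0 : 0 ≤ Phi (x - 1) := cdf_nonneg _ _
  exact lt_of_le_of_lt h0 (hm (by linarith))

/-- For fixed `μ > 0`, the function `ε ↦ δ_μ(ε)` is differentiable on `ℝ` with
derivative `−e^ε·Φ(−ε/μ − μ/2)`; in particular it is strictly decreasing. -/
theorem stmt_5 (μ : ℝ) (hμ : 0 < μ) :
    (∀ ε : ℝ, HasDerivAt (fun ε => deltaGDP μ ε)
      (-(Real.exp ε * Phi (-ε / μ - μ / 2))) ε) ∧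
    StrictAnti (fun ε => deltaGDP μ ε) := by
  have main : ∀ ε : ℝ, HasDerivAt (fun ε => deltaGDP μ ε)
      (-(Real.exp ε * Phi (-ε / μ - μ / 2))) ε := by
    intro ε
    have hl : HasDerivAt (fun e : ℝ => -e / μ) (-1 / μ) ε :=
      (hasDerivAt_id ε).neg.div_const μ
    have h1 := (Phi_hasDerivAt_aux (-ε / μ + μ / 2)).comp ε (hl.add_const (μ / 2))
    have h2 := (Phi_hasDerivAt_aux (-ε / μ - μ / 2)).comp ε (hl.sub_const (μ / 2))
    have h3 := h1.sub ((Real.hasDerivAt_exp ε).mul h2)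
    have key : gaussianPDFReal 0 1 (-ε / μ + μ / 2)
        = Real.exp ε * gaussianPDFReal 0 1 (-ε / μ - μ / 2) := by
      unfold gaussianPDFReal
      rw [mul_left_comm, ← Real.exp_add]
      congr 2
      push_cast
      field_simp
      ring
    refine HasDerivAt.congr_deriv h3 ?_
    rw [key]
    simp only [Function.comp]
    ring
  refine ⟨main, strictAnti_of_deriv_neg fun ε => ?_⟩
  rw [(main ε).deriv]
  exact neg_neg_of_pos (mul_pos (Real.exp_pos _) (Phi_pos_aux _))
end
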